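/- Let M be a semi-finite von Neumann algebra (i.e., a von Neumann algebra admitting a faithful normal semifinite trace) and let Δ : M → M be a 2-local derivation. Then Δ is a derivation, i.e., Δ is linear and satisfies Δ(xy) = Δ(x)y + xΔ(y) for all x, y ∈ M. -/

import Mathlib

open scoped ENNReal NNReal

variable {H : Type*} [NormedAddCommGroup H] [InnerProductSpace ℂ H] [CompleteSpace H]

/-- Scalar multiplication is inherited by a von Neumann algebra from `B(H)`. -/
instance : SMulMemClass (VonNeumannAlgebra H) ℂ (H →L[ℂ] H) where
  smul_mem {M} c _x hx := M.toStarSubalgebra.smul_mem hx c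

/-- A map `D : M → M` is a derivation: it is `ℂ`-linear and satisfies the Leibniz rule. -/
def IsDerivation (M : VonNeumannAlgebra H) (D : M → M) : Prop :=
  (∀ x y : M, D (x + y) = D x + D y) ∧
  (∀ (c : ℂ) (x : M), D (c • x) = c • D x) ∧
  (∀ x y : M, D (x * y) = D x * y + x * D y)

/-- A map `Δ : M → M` (not assumed linear) is a 2-local derivation if for every pair `x, y`
there is a derivation agreeing with `Δ` at `x` and at `y`. -/
def Is2LocalDerivation (M : VonNeumannAlgebra H) (Δ : M → M) : Prop :=
  ∀ x y : M, ∃ D : M → M, IsDerivation M D ∧ Δ x = D x ∧ Δ y = D y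

/-- An element of a von Neumann algebra is positive if it is a positive operator on `H`. -/
def IsPos (M : VonNeumannAlgebra H) (x : M) : Prop :=
  ContinuousLinearMap.IsPositive (x : H →L[ℂ] H)

/-- The operator (Loewner) order on a von Neumann algebra: `x ≤ y` iff `y - x` is positive. -/
def OpLE (M : VonNeumannAlgebra H) (x y : M) : Prop :=
  ContinuousLinearMap.IsPositive ((y : H →L[ℂ] H) - (x : H →L[ℂ] H))

/-- A faithful normal semifinite trace on a von Neumann algebra `M`: a map on `M` which, on the
positive cone, is additive and positively homogeneous, satisfies `τ(xx⋆) = τ(x⋆x)`, is faithful,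
normal (commutes with suprema of bounded monotone increasing nets of positive elements) and
semifinite. -/
structure FNSTrace (M : VonNeumannAlgebra H) : Type _ where
  τ : M → ℝ≥0∞
  additive : ∀ x y : M, IsPos M x → IsPos M y → τ (x + y) = τ x + τ y
  pos_smul : ∀ (c : ℝ≥0) (x : M), IsPos M x → τ ((c : ℂ) • x) = c * τ x
  tracial : ∀ x : M, τ (x * star x) = τ (star x * x)
  faithful : ∀ x : M, IsPos M x → τ x = 0 → x = 0
  normal : ∀ {ι : Type} [Nonempty ι] [Preorder ι] [IsDirected ι (· ≤ ·)]
      (f : ι → M) (s : M), (∀ i, IsPos M (f i)) →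
      (∀ i j, i ≤ j → OpLE M (f i) (f j)) →
      (∀ i, OpLE M (f i) s) → (∀ u : M, (∀ i, OpLE M (f i) u) → OpLE M s u) →
      τ s = ⨆ i, τ (f i)
  semifinite : ∀ x : M, IsPos M x → x ≠ 0 →
      ∃ y : M, IsPos M y ∧ y ≠ 0 ∧ OpLE M y x ∧ τ y < ⊤

/-- `a` belongs to the definition ideal `m_τ = {a ∈ M : τ(|a|) < ∞}`, where `|a|` is the unique
positive square root of `a⋆a`. -/
def MemIdeal (M : VonNeumannAlgebra H) (τ : M → ℝ≥0∞) (a : M) : Prop :=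
  ∃ b : M, IsPos M b ∧ b * b = star a * a ∧ τ b < ⊤


section JordanPart

variable {R : Type*} [Ring R]

lemma jordan_isDer (D : R → R) (hadd : ∀ x y, D (x + y) = D x + D y)
    (hsq : ∀ x, D (x * x) = D x * x + x * D x)
    (h2 : ∀ x : R, x + x = 0 → x = 0)
    (hsp : ∀ p : R, (∀ x, p * x * p = 0) → p = 0) (a b : R) :
    D (a * b) = D a * b + a * D b := by
  have hd0 : D 0 = 0 := by simpa using hadd 0 0
  have hneg : ∀ x, D (-x) = - D x := by
    intro x
    have := hadd x (-x)
    rw [add_neg_cancel, hd0] at this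
    exact (neg_eq_of_add_eq_zero_right this.symm).symm
  have hsub : ∀ x y, D (x - y) = D x - D y := by
    intro x y; rw [sub_eq_add_neg, hadd, hneg, sub_eq_add_neg]
  have half : ∀ x y : R, x + x = y + y → x = y := by
    intro x y h
    have : (x - y) + (x - y) = 0 := by
      rw [show (x - y) + (x - y) = (x + x) - (y + y) by abel, h, sub_self]
    exact sub_eq_zero.mp (h2 _ this)
  -- polarisation
  have hJ : ∀ x y, D (x * y) + D (y * x) = D x * y + x * D y + D y * x + y * D x := by
    intro x y
    have h := hsq (x + y)
    have e : (x + y) * (x + y) = x * x + y * y + (x * y + y * x) := by noncomm_ring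
    rw [e, hadd, hadd, hadd (x * y), hsq, hsq, hadd x y] at h
    have h3 : D (x * y) + D (y * x) = (D x + D y) * (x + y) + (x + y) * (D x + D y)
        - (D x * x + x * D x + (D y * y + y * D y)) := by rw [← h]; abel
    rw [h3]; noncomm_ring
  have hT : ∀ x y, D (x * y * x) = D x * y * x + x * D y * x + x * y * D x := by
    intro x y
    apply half
    -- x(xy+yx)+(xy+yx)x = 2xyx + x²y + yx²
    have h1 := hJ x (x * y + y * x)
    have h3 := hJ (x * x) y
    have e1 : x * (x * y + y * x) = x * x * y + x * y * x := by noncomm_ring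
    have e2 : (x * y + y * x) * x = y * (x * x) + x * y * x := by noncomm_ring
    rw [e1, e2, hadd, hadd, hadd (x * y) (y * x), hJ] at h1
    rw [hsq] at h3
    have h4 : D (x * y * x) + D (x * y * x) =
        (D (x * x * y) + D (x * y * x) + (D (y * (x * x)) + D (x * y * x)))
        - (D (x * x * y) + D (y * (x * x))) := by abel
    rw [h4, h1, h3]; noncomm_ring
  have hT2 : ∀ x y z, D (x * y * z) + D (z * y * x) =
      D x * y * z + x * D y * z + x * y * D z + D z * y * x + z * D y * x + z * y * D x := by
    intro x y z
    have h := hT (x + z) y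
    have e : (x + z) * y * (x + z) = x * y * x + z * y * z + (x * y * z + z * y * x) := by
      noncomm_ring
    rw [e, hadd, hadd, hadd (x * y * z), hT, hT, hadd x z] at h
    have h3 : D (x * y * z) + D (z * y * x) = (D x + D z) * y * (x + z) + (x + z) * D y * (x + z)
        + (x + z) * y * (D x + D z) - (D x * y * x + x * D y * x + x * y * D x
          + (D z * y * z + z * D y * z + z * y * D z)) := by rw [← h]; abel
    rw [h3]; noncomm_ring
  let E : R → R → R := fun x y => D (x * y) - D x * y - x * D y
  have hEdef : ∀ x y, E x y = D (x * y) - D x * y - x * D y := fun _ _ => rfl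
  have hEanti : ∀ x y, E y x = - E x y := by
    intro x y
    have := hJ x y
    have h3 : D (y * x) = D x * y + x * D y + D y * x + y * D x - D (x * y) := by
      rw [← this]; abel
    rw [hEdef, hEdef, h3]; abel
  have hEadd1 : ∀ x y z, E (x + y) z = E x z + E y z := by
    intro x y z
    simp only [hEdef, add_mul, hadd]; abel
  have hEadd2 : ∀ x y z, E x (y + z) = E x y + E x z := by
    intro x y z
    simp only [hEdef, mul_add, hadd]; abel
  -- key identity
  have hkey : ∀ a b x, E a b * x * (a * b - b * a) + (a * b - b * a) * x * E a b = 0 := by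
    intro a b x
    have h1 := hT2 (a * b) x (b * a)
    have h3 := hT a (b * x * b)
    have h4 := hT b (a * x * a)
    rw [hT b x] at h3
    rw [hT a x] at h4
    have e1 : a * b * x * (b * a) = a * (b * x * b) * a := by noncomm_ring
    have e2 : b * a * x * (a * b) = b * (a * x * a) * b := by noncomm_ring
    rw [e1, e2, h3, h4] at h1
    have h5 : D (b * a) = D a * b + a * D b + D b * a + b * D a - D (a * b) := by
      rw [← hJ]; abel
    rw [h5] at h1
    rw [hEdef]
    rw [← sub_eq_zero] at h1
    have h6 := h1
    rw [← h6]
    noncomm_ring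
  have hsp2 : ∀ p q : R, (∀ x, p * x * q + q * x * p = 0) → ∀ x, p * x * q = 0 := by
    intro p q h x
    have h' : ∀ x, q * x * p = - (p * x * q) := fun x => by
      rw [eq_neg_iff_add_eq_zero, add_comm]; exact h x
    apply hsp
    intro y
    apply h2
    have s1 : p * x * q * y * (p * x * q) = - (p * x * q * y * (p * x * q)) := by
      calc p * x * q * y * (p * x * q) = (p * x * q) * (y * p * x * q) := by noncomm_ring
        _ = - (q * x * p) * (y * p * x * q) := by rw [h' x, neg_neg]
        _ = - ((q * (x * p * y) * p) * (x * q)) := by noncomm_ring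
        _ = (p * (x * p * y) * q) * (x * q) := by rw [h']; noncomm_ring
        _ = p * x * (p * y * q) * (x * q) := by noncomm_ring
        _ = p * x * (- (q * y * p)) * (x * q) := by rw [h' y, neg_neg]
        _ = - (p * x * q * y * (p * x * q)) := by noncomm_ring
    nth_rewrite 1 [s1]
    simp
  have hk1 : ∀ a b x, E a b * x * (a * b - b * a) = 0 := fun a b => hsp2 _ _ (hkey a b)
  have hk2 : ∀ a b c x, E a b * x * (c * b - b * c) = 0 := by
    intro a b c x
    have lin : ∀ x, E a b * x * (c * b - b * c) = - (E c b * x * (a * b - b * a)) := by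
      intro x
      have h := hk1 (a + c) b x
      rw [hEadd1] at h
      have e : (E a b + E c b) * x * ((a + c) * b - b * (a + c)) =
        E a b * x * (a * b - b * a) + E c b * x * (c * b - b * c)
         + (E a b * x * (c * b - b * c) + E c b * x * (a * b - b * a)) := by noncomm_ring
      rw [e, hk1, hk1, add_zero, zero_add] at h
      exact eq_neg_of_add_eq_zero_left h
    apply hsp
    intro y
    calc E a b * x * (c * b - b * c) * y * (E a b * x * (c * b - b * c))
        = E a b * x * (c * b - b * c) * y * (- (E c b * x * (a * b - b * a))) := by
          rw [← lin]
      _ = - (E a b * (x * (c * b - b * c) * y * E c b * x) * (a * b - b * a)) := by noncomm_ring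
      _ = 0 := by rw [hk1, neg_zero]
  have hk3 : ∀ a b c d x, E a b * x * (c * d - d * c) = 0 := by
    intro a b c d x
    have lin : ∀ x, E a b * x * (c * d - d * c) = - (E a d * x * (c * b - b * c)) := by
      intro x
      have h := hk2 a (b + d) c x
      rw [hEadd2] at h
      have e : (E a b + E a d) * x * (c * (b + d) - (b + d) * c) =
        E a b * x * (c * b - b * c) + E a d * x * (c * d - d * c)
         + (E a b * x * (c * d - d * c) + E a d * x * (c * b - b * c)) := by noncomm_ring
      rw [e, hk2, hk2, add_zero, zero_add] at h
      exact eq_neg_of_add_eq_zero_left h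
    apply hsp
    intro y
    calc E a b * x * (c * d - d * c) * y * (E a b * x * (c * d - d * c))
        = E a b * x * (c * d - d * c) * y * (- (E a d * x * (c * b - b * c))) := by
          rw [← lin]
      _ = - (E a b * (x * (c * d - d * c) * y * E a d * x) * (c * b - b * c)) := by noncomm_ring
      _ = 0 := by rw [hk2, neg_zero]
  have hcent : ∀ y, E a b * y = y * E a b := by
    intro y
    rw [← sub_eq_zero]
    apply hsp
    intro x
    have h1 := hk3 a b (E a b) y (y * x)
    have h3 := hk3 a b (E a b) y x
    calc (E a b * y - y * E a b) * x * (E a b * y - y * E a b)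
        = E a b * (y * x) * (E a b * y - y * E a b)
          - y * (E a b * x * (E a b * y - y * E a b)) := by noncomm_ring
      _ = 0 := by rw [h1, h3, mul_zero, sub_zero]
  have hcom : ∀ c d, E a b * (c * d - d * c) = 0 := by
    intro c d; simpa using hk3 a b c d 1
  set e := E a b with he
  set W := a * b - b * a with hW
  have h2e : e * e + e * e = e * D W := by
    have h1 : e + e = D W - (D a * b - b * D a) - (a * D b - D b * a) := by
      have : e + e = E a b - E b a := by rw [hEanti a b, sub_neg_eq_add]
      rw [this, hEdef, hEdef, hW, hsub]; abel
    rw [← mul_add, h1, mul_sub, mul_sub, hcom, hcom, sub_zero, sub_zero]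
  have heW : e * W = 0 := hcom a b
  have hWe : W * e = 0 := by rw [← hcent, heW]
  have h5 := hJ e W
  rw [heW, hWe, hd0, add_zero] at h5
  have h6 : e * (e * D W) = 0 := by
    apply h2
    have := congrArg (fun t => e * t) h5
    simp only [mul_zero] at this
    have h7 : e * (D e * W) = 0 := by rw [← mul_assoc, hcent, mul_assoc, heW, mul_zero]
    have h8 : e * (W * D e) = 0 := by rw [← mul_assoc, heW, zero_mul]
    rw [mul_add, mul_add, mul_add, h7, h8, zero_add, add_zero, ← hcent] at this
    exact this.symm
  have h7 : e * e * e = 0 := by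
    apply h2
    rw [← h2e, mul_add] at h6
    rw [mul_assoc]; exact h6
  have h8 : e * e = 0 := by
    apply hsp
    intro x
    calc e * e * x * (e * e) = x * (e * e * e) * e := by
          rw [show e * e * x = x * (e * e) by rw [mul_assoc, hcent, ← mul_assoc, hcent, mul_assoc],
            hcent]; noncomm_ring
      _ = 0 := by rw [h7]; simp
  have h9 : e = 0 := by
    apply hsp
    intro x
    rw [hcent, mul_assoc, h8, mul_zero]
  have : D (a * b) - D a * b - a * D b = 0 := h9
  rw [sub_sub, sub_eq_zero] at this
  exact this

end JordanPart
open scoped ComplexStarModule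
section DerBdd

variable {A : Type*} [CStarAlgebra A] [PartialOrder A] [StarOrderedRing A]

lemma nontriv_of_norm_one (a : A) (h1 : ‖a‖ = 1) : Nontrivial A := by
  refine ⟨a, 0, ?_⟩
  rintro rfl
  simp at h1

lemma pow_one_sub_norm (a : A) (ha : 0 ≤ a) (h1 : ‖a‖ = 1) (n : ℕ) :
    ‖a ^ n * (1 - a)‖ ≤ 1 / (n + 1) := by
  have := nontriv_of_norm_one a h1
  have hsa : IsSelfAdjoint a := ha.isSelfAdjoint
  have e : a ^ n * (1 - a) = cfc (fun x : ℝ => x ^ n * (1 - x)) a := by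
    rw [cfc_mul (fun x : ℝ => x ^ n) (fun x => 1 - x) a, cfc_pow_id a n,
      cfc_sub (fun _ : ℝ => (1 : ℝ)) (fun x => x) a]
    simp [cfc_const_one ℝ a, cfc_id' ℝ a]
  rw [e]
  apply norm_cfc_le (by positivity)
  intro x hx
  have hx0 : 0 ≤ x := spectrum_nonneg_of_nonneg ha hx
  have hx1 : x ≤ 1 := by
    have := spectrum.norm_le_norm_of_mem hx
    rw [h1] at this
    exact (le_abs_self x).trans this
  have h3 : 0 ≤ x ^ n * (1 - x) := mul_nonneg (pow_nonneg hx0 n) (by linarith)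
  rw [Real.norm_of_nonneg h3, le_div_iff₀ (by positivity)]
  have h4 : ((n : ℝ) + 1) * x ^ n ≤ ∑ i ∈ Finset.range (n + 1), x ^ i := by
    have : ∑ i ∈ Finset.range (n + 1), x ^ n ≤ ∑ i ∈ Finset.range (n + 1), x ^ i := by
      apply Finset.sum_le_sum
      intro i hi
      exact pow_le_pow_of_le_one hx0 hx1 (by have := Finset.mem_range.mp hi; omega)
    simpa using this
  have h5 := geom_sum_mul_neg x (n + 1)
  have h6 : ((n : ℝ) + 1) * x ^ n * (1 - x) ≤ 1 - x ^ (n + 1) := by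
    rw [← h5]; exact mul_le_mul_of_nonneg_right h4 (by linarith)
  have h7 : 0 ≤ x ^ (n + 1) := by positivity
  nlinarith

lemma one_le_norm_pow (a : A) (ha : 0 ≤ a) (h1 : ‖a‖ = 1) (n : ℕ) : 1 ≤ ‖a ^ n‖ := by
  have := nontriv_of_norm_one a h1
  have h2 := ha.isSelfAdjoint.nnnorm_pow_two_pow n
  have h3 : ‖a ^ 2 ^ n‖ = 1 := by
    have := congrArg NNReal.toReal h2
    simpa [h1] using this
  have h4 : a ^ 2 ^ n = a ^ n * a ^ (2 ^ n - n) := by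
    rw [← pow_add]; congr 1
    have := Nat.lt_two_pow_self (n := n); omega
  have h5 : ‖a ^ (2 ^ n - n)‖ ≤ 1 := by
    have := norm_pow_le a (2 ^ n - n)
    simpa [h1] using this
  calc (1 : ℝ) = ‖a ^ n * a ^ (2 ^ n - n)‖ := by rw [← h4, h3]
    _ ≤ ‖a ^ n‖ * ‖a ^ (2 ^ n - n)‖ := norm_mul_le _ _
    _ ≤ ‖a ^ n‖ * 1 := by gcongr
    _ = _ := mul_one _

lemma dissip_one (a c P Q : A) (ha : 0 ≤ a) (h1 : ‖a‖ = 1) (hc : IsSelfAdjoint c)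
    (hcc : c * c = 1 - a) : 1 ≤ ‖a + (P * c + c * Q)‖ := by
  have := nontriv_of_norm_one a h1
  have hsa : IsSelfAdjoint a := ha.isSelfAdjoint
  have hle : ∀ k : ℕ, ‖a ^ k‖ ≤ 1 := fun k => by
    have := norm_pow_le a k
    simpa [h1] using this
  have hck : ∀ k : ℕ, ‖c * a ^ k‖ ≤ Real.sqrt (1 / (k + 1)) := by
    intro k
    apply Real.le_sqrt_of_sq_le
    have e : star (c * a ^ k) * (c * a ^ k) = a ^ k * (a ^ k * (1 - a)) := by
      rw [star_mul, hc.star_eq, (hsa.pow k).star_eq, mul_assoc, ← mul_assoc c c, hcc]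
      congr 1
      have : Commute (1 - a) (a ^ k) := ((Commute.one_left a).sub_left (Commute.refl a)).pow_right k
      exact this.eq
    rw [sq, ← CStarRing.norm_star_mul_self, e]
    calc _ ≤ ‖a ^ k‖ * ‖a ^ k * (1 - a)‖ := norm_mul_le _ _
      _ ≤ 1 * (1 / (k + 1)) := by
        gcongr
        · exact hle k
        · exact pow_one_sub_norm a ha h1 k
      _ = _ := one_mul _
  have hck' : ∀ k : ℕ, ‖a ^ k * c‖ ≤ Real.sqrt (1 / (k + 1)) := by
    intro k
    have := hck k
    rw [← norm_star, star_mul, hc.star_eq, (hsa.pow k).star_eq] at this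
    exact this
  have key : ∀ k : ℕ, 1 - (‖P‖ + ‖Q‖) * Real.sqrt (1 / (k + 1)) ≤ ‖a + (P * c + c * Q)‖ := by
    intro k
    have e1 : a ^ k * (a + (P * c + c * Q)) * a ^ k
        = a ^ (k + 1 + k) + (a ^ k * P * (c * a ^ k) + (a ^ k * c) * Q * a ^ k) := by
      rw [pow_add, pow_succ]; noncomm_ring
    have n1 : ‖a ^ k * (a + (P * c + c * Q)) * a ^ k‖ ≤ ‖a + (P * c + c * Q)‖ := by
      calc _ ≤ ‖a ^ k‖ * ‖a + (P * c + c * Q)‖ * ‖a ^ k‖ := norm_mul₃_le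
        _ ≤ 1 * ‖a + (P * c + c * Q)‖ * 1 := by
          gcongr
          · exact hle k
          · exact hle k
        _ = _ := by ring
    have n2 : ‖a ^ k * P * (c * a ^ k)‖ ≤ ‖P‖ * Real.sqrt (1 / (k + 1)) := by
      calc _ ≤ ‖a ^ k‖ * ‖P‖ * ‖c * a ^ k‖ := norm_mul₃_le
        _ ≤ 1 * ‖P‖ * Real.sqrt (1 / (k + 1)) := by
          gcongr
          · exact hle k
          · exact hck k
        _ = _ := by ring
    have n3 : ‖(a ^ k * c) * Q * a ^ k‖ ≤ ‖Q‖ * Real.sqrt (1 / (k + 1)) := by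
      calc _ ≤ ‖a ^ k * c‖ * ‖Q‖ * ‖a ^ k‖ := norm_mul₃_le
        _ ≤ Real.sqrt (1 / (k + 1)) * ‖Q‖ * 1 := by
          gcongr
          · exact hck' k
          · exact hle k
        _ = _ := by ring
    have n4 := norm_sub_le (a ^ (k + 1 + k) + (a ^ k * P * (c * a ^ k) + (a ^ k * c) * Q * a ^ k))
      (a ^ k * P * (c * a ^ k) + (a ^ k * c) * Q * a ^ k)
    rw [add_sub_cancel_right, ← e1] at n4
    have n5 := norm_add_le (a ^ k * P * (c * a ^ k)) ((a ^ k * c) * Q * a ^ k)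
    have n6 := one_le_norm_pow a ha h1 (k + 1 + k)
    linarith
  have hlim : Filter.Tendsto (fun k : ℕ => 1 - (‖P‖ + ‖Q‖) * Real.sqrt (1 / ((k : ℝ) + 1)))
      Filter.atTop (nhds (1 - (‖P‖ + ‖Q‖) * Real.sqrt 0)) := by
    refine tendsto_const_nhds.sub (tendsto_const_nhds.mul ?_)
    exact (Real.continuous_sqrt.tendsto 0).comp tendsto_one_div_add_atTop_nhds_zero_nat
  have := le_of_tendsto' hlim key
  simpa using this

variable (D : A →ₗ[ℂ] A) (hD : ∀ x y, D (x * y) = D x * y + x * D y)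
include hD

lemma der_one : D 1 = 0 := by
  have := hD 1 1
  simpa using this

lemma der_realsmul (t : ℝ) (x : A) : D (t • x) = t • D x := by
  rw [← Complex.coe_smul, ← Complex.coe_smul, map_smul]

lemma dissip (a : A) (ha : 0 ≤ a) (t : ℝ) : ‖a‖ ≤ ‖a + t • (D a + star (D a))‖ := by
  rcases eq_or_ne a 0 with rfl | hne
  · simp
  have hr : 0 < ‖a‖ := norm_pos_iff.mpr hne
  set r := ‖a‖ with hrdef
  set a' : A := r⁻¹ • a with ha'
  have ha0 : 0 ≤ a' := smul_nonneg (by positivity) ha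
  have hn : ‖a'‖ = 1 := by
    rw [ha', norm_smul, ← hrdef, norm_inv, Real.norm_of_nonneg hr.le, inv_mul_cancel₀ hr.ne']
  have hle : 0 ≤ 1 - a' := by
    rw [sub_nonneg]
    exact (CStarAlgebra.norm_le_one_iff_of_nonneg a' ha0).mp hn.le
  set c := CFC.sqrt (1 - a') with hc
  have hcsa : IsSelfAdjoint c := (CFC.sqrt_nonneg (1 - a')).isSelfAdjoint
  have hcc : c * c = 1 - a' := CFC.sqrt_mul_sqrt_self (1 - a') hle
  have hDa : D a' = - (D c * c + c * D c) := by
    have := hD c c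
    rw [hcc, map_sub, der_one D hD, zero_sub] at this
    rw [← this, neg_neg]
  have h := dissip_one a' c (-(t • (D c + star (D c)))) (-(t • (D c + star (D c)))) ha0 hn hcsa hcc
  have e : a + t • (D a + star (D a)) = r • (a' + (-(t • (D c + star (D c))) * c +
      c * -(t • (D c + star (D c))))) := by
    have e1 : a = r • a' := by rw [ha', smul_smul, mul_inv_cancel₀ hr.ne', one_smul]
    rw [e1, der_realsmul D hD, hDa]
    simp only [star_smul, star_trivial, star_neg, star_add, star_mul, hcsa.star_eq, neg_mul, mul_neg,
      smul_mul_assoc, mul_smul_comm, add_mul, mul_add, smul_add, smul_neg]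
    simp only [smul_comm t r]
    abel
  rw [e, norm_smul, Real.norm_of_nonneg hr.le]
  nlinarith

open Filter Topology in
lemma closable_half (x : ℕ → A) (hx : ∀ n, IsSelfAdjoint (x n)) (y : A)
    (h0 : Tendsto x atTop (𝓝 0)) (hy : Tendsto (fun n => D (x n)) atTop (𝓝 y)) :
    y + star y ≤ 0 := by
  set z := y + star y with hz
  have hzsa : IsSelfAdjoint z := IsSelfAdjoint.add_star_self y
  set r : ℝ := ‖z‖ + 1 with hr
  set R : A := algebraMap ℝ A r with hR
  have hDR : D R = 0 := by
    rw [hR, Algebra.algebraMap_eq_smul_one, der_realsmul D hD, der_one D hD, smul_zero]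
  set W := D z + star (D z) with hW
  have main : ∀ t : ℝ, 0 < t → ‖z + R‖ ≤ ‖R - t • W‖ := by
    intro t ht
    have ev : ∀ᶠ n in atTop, ‖x n + t • (z + R)‖ ≤
        ‖x n + t • (z + R) + (-t) • (D (x n + t • (z + R)) + star (D (x n + t • (z + R))))‖ := by
      have h1 : ∀ᶠ n in atTop, ‖x n‖ < t := by
        have := h0.norm
        rw [norm_zero] at this
        exact this.eventually_lt_const ht
      filter_upwards [h1] with n hn
      apply dissip D hD
      have g1 := (hx n).neg_algebraMap_norm_le_self
      have g2 := hzsa.neg_algebraMap_norm_le_self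
      have g3 : algebraMap ℝ A ‖x n‖ ≤ t • (1 : A) := by
        rw [Algebra.algebraMap_eq_smul_one]
        exact smul_le_smul_of_nonneg_right hn.le zero_le_one
      have g4 : (1 : A) ≤ z + R := by
        have : R = algebraMap ℝ A ‖z‖ + 1 := by rw [hR, hr, map_add, map_one]
        rw [this]
        have := add_le_add_left (neg_le_iff_add_nonneg.mp g2) (1 : A)
        calc (1 : A) = 0 + 1 := by simp
          _ ≤ _ := add_le_add (neg_le_iff_add_nonneg.mp g2) le_rfl
          _ = _ := by abel
      have g5 : t • (1 : A) ≤ t • (z + R) := smul_le_smul_of_nonneg_left g4 ht.le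
      have g6 := add_le_add g1 g5
      refine le_trans ?_ g6
      rw [neg_add_eq_sub, sub_nonneg]; exact g3
    have l1 : Tendsto (fun n => ‖x n + t • (z + R)‖) atTop (𝓝 ‖0 + t • (z + R)‖) :=
      (h0.add tendsto_const_nhds).norm
    have l2 : Tendsto (fun n => ‖x n + t • (z + R) + (-t) • (D (x n + t • (z + R))
        + star (D (x n + t • (z + R))))‖) atTop
        (𝓝 ‖0 + t • (z + R) + (-t) • (y + t • D z + star (y + t • D z))‖) := by
      have : ∀ n, D (x n + t • (z + R)) = D (x n) + t • D z := by
        intro n; rw [map_add, der_realsmul D hD, map_add, hDR, add_zero]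
      simp only [this]
      have l3 := hy.add (tendsto_const_nhds (x := t • D z))
      exact ((h0.add tendsto_const_nhds).add ((l3.add l3.star).const_smul (-t))).norm
    have l4 := le_of_tendsto_of_tendsto l1 l2 ev
    have e : 0 + t • (z + R) + (-t) • (y + t • D z + star (y + t • D z)) = t • (R - t • W) := by
      rw [hW, hz]
      simp only [star_add, star_smul, star_trivial, smul_add, smul_sub, neg_smul]
      abel
    rw [e, zero_add, norm_smul, norm_smul, Real.norm_of_nonneg ht.le] at l4
    exact le_of_mul_le_mul_left l4 ht
  have lim : Tendsto (fun t : ℝ => ‖R - t • W‖) (𝓝[>] 0) (𝓝 ‖R - (0 : ℝ) • W‖) := by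
    have : Continuous (fun t : ℝ => ‖R - t • W‖) := by fun_prop
    exact (this.tendsto 0).mono_left nhdsWithin_le_nhds
  have h3 : ‖z + R‖ ≤ ‖R - (0 : ℝ) • W‖ := by
    apply ge_of_tendsto lim
    filter_upwards [self_mem_nhdsWithin] with t ht
    exact main t ht
  have h4 : ‖z + R‖ ≤ r := by
    rw [zero_smul, sub_zero] at h3
    refine h3.trans ?_
    rw [hR, Algebra.algebraMap_eq_smul_one, norm_smul]
    have : ‖(1 : A)‖ ≤ 1 := by
      rcases subsingleton_or_nontrivial A with h | h
      · rw [Subsingleton.elim (1 : A) 0]; simp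
      · simp
    rw [Real.norm_of_nonneg (by positivity)]
    have : 0 ≤ r := by positivity
    nlinarith
  have hpos : 0 ≤ z + R := by
    have g2 := hzsa.neg_algebraMap_norm_le_self
    have g7 : algebraMap ℝ A ‖z‖ ≤ R := by
      rw [hR, hr, map_add, map_one]; exact le_add_of_nonneg_right zero_le_one
    have := neg_le_iff_add_nonneg.mp g2
    exact this.trans (add_le_add le_rfl g7)
  have h5 := (CStarAlgebra.norm_le_iff_le_algebraMap (z + R) (by positivity) hpos).mp h4
  simpa [hR] using h5

open Filter Topology in
lemma closable_re (x : ℕ → A) (hx : ∀ n, IsSelfAdjoint (x n)) (y : A)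
    (h0 : Tendsto x atTop (𝓝 0)) (hy : Tendsto (fun n => D (x n)) atTop (𝓝 y)) :
    y + star y = 0 := by
  apply le_antisymm (closable_half D hD x hx y h0 hy)
  have := closable_half D hD (fun n => - x n) (fun n => (hx n).neg) (-y)
    (by simpa using h0.neg) (by simpa using hy.neg)
  rw [star_neg, ← neg_add] at this
  exact neg_nonpos.mp this

open Filter Topology in
lemma closable_sa (x : ℕ → A) (hx : ∀ n, IsSelfAdjoint (x n)) (y : A)
    (h0 : Tendsto x atTop (𝓝 0)) (hy : Tendsto (fun n => D (x n)) atTop (𝓝 y)) :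
    y = 0 := by
  have h1 := closable_re D hD x hx y h0 hy
  have h2 := closable_re (Complex.I • D) (fun a b => by simp [hD]) x hx (Complex.I • y) h0
    (by simpa using hy.const_smul Complex.I)
  rw [star_smul, Complex.star_def, Complex.conj_I, neg_smul, ← sub_eq_add_neg, ← smul_sub] at h2
  have h3 : y - star y = 0 := (smul_eq_zero.mp h2).resolve_left Complex.I_ne_zero
  have h4 : (2 : ℂ) • y = 0 := by
    rw [two_smul]
    calc y + y = (y + star y) + (y - star y) := by abel
      _ = 0 := by rw [h1, h3, add_zero]
  exact (smul_eq_zero.mp h4).resolve_left two_ne_zero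

omit [PartialOrder A] [StarOrderedRing A] in
theorem der_bounded : ∃ C : ℝ, ∀ x, ‖D x‖ ≤ C * ‖x‖ := by
  let _ := CStarAlgebra.spectralOrder A
  have := CStarAlgebra.spectralOrderedRing A
  have : CompleteSpace (selfAdjoint A) :=
    (isClosed_eq continuous_star continuous_id : IsClosed {x : A | star x = x}).completeSpace_coe
  let g : selfAdjoint A →ₗ[ℝ] A :=
    { toFun := fun x => D x
      map_add' := fun x y => by simp
      map_smul' := fun t x => by simpa using der_realsmul D hD t x }
  have hg : Continuous g := by
    apply LinearMap.continuous_of_seq_closed_graph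
    intro u x y hu hy
    have h1 : Filter.Tendsto (fun n => ((u n : A) - x)) Filter.atTop (nhds 0) := by
      have : Filter.Tendsto (fun n => (u n : A)) Filter.atTop (nhds x) :=
        (continuous_subtype_val.tendsto x).comp hu
      simpa using this.sub_const (x : A)
    have h2 : Filter.Tendsto (fun n => D ((u n : A) - x)) Filter.atTop (nhds (y - D x)) := by
      simp only [map_sub]
      exact hy.sub_const (D x)
    exact sub_eq_zero.mp (closable_sa D hD _ (fun n => (u n).2.sub x.2) _ h1 h2)
  let G : selfAdjoint A →L[ℝ] A := ⟨g, hg⟩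
  refine ⟨‖G‖ + ‖G‖, fun x => ?_⟩
  have e : D x = G (ℜ x) + Complex.I • G (ℑ x) := by
    have : D x = D ((ℜ x : A) + Complex.I • (ℑ x : A)) := by
      rw [realPart_add_I_smul_imaginaryPart]
    rw [this, map_add, map_smul]; rfl
  rw [e]
  have b1 : ‖G (ℜ x)‖ ≤ ‖G‖ * ‖x‖ :=
    (G.le_opNorm _).trans (by gcongr; exact realPart.norm_le x)
  have b2 : ‖Complex.I • G (ℑ x)‖ ≤ ‖G‖ * ‖x‖ := by
    rw [norm_smul, Complex.norm_I, one_mul]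
    exact (G.le_opNorm _).trans (by gcongr; exact imaginaryPart.norm_le x)
  calc _ ≤ _ := norm_add_le _ _
    _ ≤ _ := by linarith

end DerBdd
open scoped ENNReal NNReal
section TracePart

variable {A : Type*} [CStarAlgebra A] [PartialOrder A] [StarOrderedRing A]

structure AbsTrace (τ : A → ℝ≥0∞) : Prop where
  add : ∀ x y : A, 0 ≤ x → 0 ≤ y → τ (x + y) = τ x + τ y
  smul : ∀ (c : ℝ≥0) (x : A), 0 ≤ x → τ ((c : ℂ) • x) = c * τ x
  tracial : ∀ x : A, τ (x * star x) = τ (star x * x)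
  faithful : ∀ x : A, 0 ≤ x → τ x = 0 → x = 0
  semifinite : ∀ x : A, 0 ≤ x → x ≠ 0 → ∃ y : A, 0 ≤ y ∧ y ≠ 0 ∧ y ≤ x ∧ τ y < ⊤

variable {τ : A → ℝ≥0∞}

lemma AbsTrace.mono (h : AbsTrace τ) {x y : A} (hx : 0 ≤ x) (hxy : x ≤ y) : τ x ≤ τ y := by
  have := h.add x (y - x) hx (sub_nonneg.mpr hxy)
  rw [add_sub_cancel] at this
  rw [this]; exact le_self_add

lemma AbsTrace.q_add (h : AbsTrace τ) {x y : A} (hx : τ (star x * x) < ⊤) (hy : τ (star y * y) < ⊤) :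
    τ (star (x + y) * (x + y)) < ⊤ := by
  have e : star (x + y) * (x + y) + star (x - y) * (x - y)
      = (star x * x + star x * x) + (star y * y + star y * y) := by
    rw [star_add, star_sub]; noncomm_ring
  have h1 : τ (star (x + y) * (x + y)) ≤ τ (star (x + y) * (x + y) + star (x - y) * (x - y)) :=
    h.mono (star_mul_self_nonneg _) (le_add_of_nonneg_right (star_mul_self_nonneg _))
  have px := star_mul_self_nonneg x
  have py := star_mul_self_nonneg y
  rw [e, h.add _ _ (add_nonneg px px) (add_nonneg py py), h.add _ _ px px, h.add _ _ py py] at h1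
  refine h1.trans_lt ?_
  simp [hx, hy]

lemma AbsTrace.q_smul (h : AbsTrace τ) (c : ℂ) (x : A) :
    τ (star (c • x) * (c • x)) = (‖c‖₊ ^ 2 : ℝ≥0) * τ (star x * x) := by
  rw [← h.smul _ _ (star_mul_self_nonneg x)]
  congr 1
  rw [star_smul, smul_mul_assoc, mul_smul_comm, smul_smul]
  congr 1
  rw [Complex.star_def, ← Complex.normSq_eq_conj_mul_self, Complex.normSq_eq_norm_sq]
  simp

lemma AbsTrace.q_mul (h : AbsTrace τ) (a x : A) :
    τ (star (a * x) * (a * x)) ≤ (‖a‖₊ ^ 2 : ℝ≥0) * τ (star x * x) := by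
  rw [← h.smul _ _ (star_mul_self_nonneg x)]
  apply h.mono (star_mul_self_nonneg _)
  have h1 : star a * a ≤ algebraMap ℝ A (‖a‖ ^ 2) := CStarAlgebra.star_mul_le_algebraMap_norm_sq
  have h2 := star_left_conjugate_le_conjugate h1 x
  have e1 : star (a * x) * (a * x) = star x * (star a * a) * x := by
    rw [star_mul]; noncomm_ring
  have e2 : star x * algebraMap ℝ A (‖a‖ ^ 2) * x = (((‖a‖₊ ^ 2 : ℝ≥0)) : ℂ) • (star x * x) := by
    rw [Algebra.algebraMap_eq_smul_one, mul_smul_comm, mul_one, smul_mul_assoc,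
      ← Complex.coe_smul]
    simp
  rw [e1, ← e2]; exact h2

/-- The left ideal of square-integrable elements. -/
def AbsTrace.n (h : AbsTrace τ) : Submodule ℂ A where
  carrier := {x | τ (star x * x) < ⊤}
  add_mem' := fun hx hy => h.q_add hx hy
  zero_mem' := by
    have := h.smul 0 0 le_rfl
    simp at this
    simp [this]
  smul_mem' := fun c x hx => by
    change τ (star (c • x) * (c • x)) < ⊤
    rw [h.q_smul]
    exact ENNReal.mul_lt_top ENNReal.coe_lt_top hx

lemma AbsTrace.mem_n (h : AbsTrace τ) {x : A} : x ∈ h.n ↔ τ (star x * x) < ⊤ := Iff.rfl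

lemma AbsTrace.n_mul_left (h : AbsTrace τ) (a : A) {x : A} (hx : x ∈ h.n) : a * x ∈ h.n :=
  (h.q_mul a x).trans_lt (ENNReal.mul_lt_top ENNReal.coe_lt_top hx)

lemma AbsTrace.n_star (h : AbsTrace τ) {x : A} (hx : x ∈ h.n) : star x ∈ h.n := by
  rw [h.mem_n, star_star, h.tracial]; exact hx

lemma AbsTrace.n_mul_right (h : AbsTrace τ) (a : A) {x : A} (hx : x ∈ h.n) : x * a ∈ h.n := by
  have := h.n_star (h.n_mul_left (star a) (h.n_star hx))
  simpa using this

lemma exists_factor {V W : Type*} [AddCommGroup V] [Module ℂ V] [AddCommGroup W] [Module ℂ W]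
    (f : V →ₗ[ℂ] W) (g : V →ₗ[ℂ] ℂ) (hk : ∀ v, f v = 0 → g v = 0) :
    ∃ φ : W →ₗ[ℂ] ℂ, ∀ v, φ (f v) = g v := by
  obtain ⟨s, hs⟩ := f.rangeRestrict.exists_rightInverse_of_surjective f.range_rangeRestrict
  obtain ⟨φ, hφ⟩ := LinearMap.exists_extend (g.comp s)
  refine ⟨φ, fun v => ?_⟩
  have h1 : φ (f v) = g (s (f.rangeRestrict v)) := by
    have := LinearMap.congr_fun hφ (f.rangeRestrict v)
    simpa using this
  rw [h1, ← sub_eq_zero, ← map_sub]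
  apply hk
  rw [map_sub, sub_eq_zero]
  have := LinearMap.congr_fun hs (f.rangeRestrict v)
  simpa using congrArg Subtype.val this

lemma AbsTrace.zero (h : AbsTrace τ) : τ 0 = 0 := by
  have := h.smul 0 0 le_rfl
  simpa using this

lemma AbsTrace.sum (h : AbsTrace τ) {ι : Type*} (s : Finset ι) (f : ι → A) (c : ι → ℝ≥0)
    (hf : ∀ i, 0 ≤ f i) : τ (∑ i ∈ s, (c i : ℂ) • f i) = ∑ i ∈ s, c i * τ (f i)
      ∧ 0 ≤ ∑ i ∈ s, (c i : ℂ) • f i := by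
  classical
  induction s using Finset.induction_on with
  | empty => simp [h.zero]
  | insert a s ha ih =>
    have p : 0 ≤ (c a : ℂ) • f a := by
      rw [Complex.coe_smul]; exact smul_nonneg (c a).2 (hf a)
    rw [Finset.sum_insert ha, Finset.sum_insert ha]
    exact ⟨by rw [h.add _ _ p ih.2, ih.1, h.smul _ _ (hf a)], add_nonneg p ih.2⟩

/-- Real combinations. -/
lemma AbsTrace.real_rel (h : AbsTrace τ) {ι : Type*} (s : Finset ι) (f : ι → A) (c : ι → ℝ)
    (hf : ∀ i, 0 ≤ f i) (hfin : ∀ i, τ (f i) < ⊤) (h0 : ∑ i ∈ s, (c i : ℂ) • f i = 0) :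
    ∑ i ∈ s, c i * (τ (f i)).toReal = 0 := by
  have hc : ∀ i, c i = ((c i).toNNReal : ℝ) - ((-c i).toNNReal : ℝ) := by
    intro i
    rw [Real.coe_toNNReal', Real.coe_toNNReal', max_comm, max_comm (-c i)]
    have := max_zero_sub_max_neg_zero_eq_self (c i)
    rw [max_comm, max_comm (-c i)] at this
    exact this.symm
  have h1 : ∑ i ∈ s, (((c i).toNNReal : ℝ≥0) : ℂ) • f i
      = ∑ i ∈ s, (((-c i).toNNReal : ℝ≥0) : ℂ) • f i := by
    rw [← sub_eq_zero, ← Finset.sum_sub_distrib, ← h0]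
    apply Finset.sum_congr rfl
    intro i _
    rw [← sub_smul]
    congr 1
    have := hc i
    conv_rhs => rw [this]
    push_cast; rfl
  have h2 := congrArg τ h1
  rw [(h.sum s f _ hf).1, (h.sum s f _ hf).1] at h2
  have h3 := congrArg ENNReal.toReal h2
  rw [ENNReal.toReal_sum (fun i _ => (ENNReal.mul_lt_top ENNReal.coe_lt_top (hfin i)).ne),
    ENNReal.toReal_sum (fun i _ => (ENNReal.mul_lt_top ENNReal.coe_lt_top (hfin i)).ne)] at h3
  rw [← sub_eq_zero, ← Finset.sum_sub_distrib] at h3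
  rw [← h3]
  apply Finset.sum_congr rfl
  intro i _
  rw [ENNReal.toReal_mul, ENNReal.toReal_mul, ENNReal.coe_toReal, ENNReal.coe_toReal, ← sub_mul,
    ← hc]

theorem AbsTrace.exists_phi (h : AbsTrace τ) : ∃ φ : A →ₗ[ℂ] ℂ, ∀ x ∈ h.n,
    φ (star x * x) = ((τ (star x * x)).toReal : ℂ) := by
  let f : (h.n →₀ ℂ) →ₗ[ℂ] A := Finsupp.linearCombination ℂ (fun x : h.n => star (x : A) * x)
  let g : (h.n →₀ ℂ) →ₗ[ℂ] ℂ := Finsupp.linearCombination ℂ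
    (fun x : h.n => ((τ (star (x : A) * x)).toReal : ℂ))
  obtain ⟨φ, hφ⟩ := exists_factor f g (by
    intro v hv
    let F : h.n → A := fun x => star (x : A) * x
    have hF : ∀ i, 0 ≤ F i := fun i => star_mul_self_nonneg _
    have hfin : ∀ i, τ (F i) < ⊤ := fun i => i.2
    have hv1 : ∑ i ∈ v.support, v i • F i = 0 := hv
    have hstar : ∑ i ∈ v.support, (starRingEnd ℂ (v i)) • F i = 0 := by
      have := congrArg star hv1
      rw [star_sum, star_zero] at this
      rw [← this]
      apply Finset.sum_congr rfl
      intro i _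
      rw [star_smul, (hF i).isSelfAdjoint.star_eq]; rfl
    have hre : ∑ i ∈ v.support, (((v i).re : ℝ) : ℂ) • F i = 0 := by
      have e : ∀ i, (((v i).re : ℝ) : ℂ) • F i
          = (2⁻¹ : ℂ) • (v i • F i + (starRingEnd ℂ (v i)) • F i) := by
        intro i
        rw [← add_smul, smul_smul, Complex.add_conj]; congr 1; push_cast; ring
      simp only [e]
      rw [← Finset.smul_sum, Finset.sum_add_distrib, hv1, hstar]; simp
    have him : ∑ i ∈ v.support, (((v i).im : ℝ) : ℂ) • F i = 0 := by
      have e : ∀ i, (((v i).im : ℝ) : ℂ) • F i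
          = (2⁻¹ * -Complex.I : ℂ) • (v i • F i - (starRingEnd ℂ (v i)) • F i) := by
        intro i
        rw [← sub_smul, smul_smul, Complex.sub_conj]; congr 1; push_cast
        linear_combination ((v i).im : ℂ) * Complex.I_mul_I
      simp only [e]
      rw [← Finset.smul_sum, Finset.sum_sub_distrib, hv1, hstar]; simp
    have r1 := h.real_rel v.support F (fun i => (v i).re) hF hfin hre
    have r2 := h.real_rel v.support F (fun i => (v i).im) hF hfin him
    change ∑ i ∈ v.support, v i • ((τ (F i)).toReal : ℂ) = 0
    apply Complex.ext
    · rw [Complex.re_sum]; simpa using r1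
    · rw [Complex.im_sum]; simpa using r2)
  refine ⟨φ, fun x hx => ?_⟩
  have := hφ (Finsupp.single ⟨x, hx⟩ 1)
  simpa [f, g] using this

end TracePart

section FinalPart
open scoped ComplexStarModule

variable {A : Type*} [CStarAlgebra A] [PartialOrder A] [StarOrderedRing A] {τ : A → ℝ≥0∞}

lemma polar_left (x y : A) : (4 : ℂ) • (star y * x) =
    star (x + y) * (x + y) - star (x - y) * (x - y)
    + Complex.I • (star (x + Complex.I • y) * (x + Complex.I • y))
    - Complex.I • (star (x - Complex.I • y) * (x - Complex.I • y)) := by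
  simp only [star_add, star_sub, star_smul, Complex.star_def, Complex.conj_I, add_mul, mul_add,
    sub_mul, mul_sub, smul_mul_assoc, mul_smul_comm, smul_add, smul_sub, smul_smul, neg_smul,
    mul_neg, neg_mul, Complex.I_mul_I, one_smul, neg_neg, neg_zero]
  match_scalars <;> first | ring1 | linear_combination 2 * Complex.I_mul_I

lemma polar_right (x y : A) : (4 : ℂ) • (x * star y) =
    (x + y) * star (x + y) - (x - y) * star (x - y)
    + Complex.I • ((x + Complex.I • y) * star (x + Complex.I • y))
    - Complex.I • ((x - Complex.I • y) * star (x - Complex.I • y)) := by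
  simp only [star_add, star_sub, star_smul, Complex.star_def, Complex.conj_I, add_mul, mul_add,
    sub_mul, mul_sub, smul_mul_assoc, mul_smul_comm, smul_add, smul_sub, smul_smul, neg_smul,
    mul_neg, neg_mul, Complex.I_mul_I, one_smul, neg_neg, neg_zero]
  match_scalars <;> first | ring1 | linear_combination 2 * Complex.I_mul_I

/-- The definition ideal. -/
noncomputable def AbsTrace.m (h : AbsTrace τ) : Submodule ℂ A := h.n * h.n

lemma AbsTrace.m_left (h : AbsTrace τ) (a : A) {w : A} (hw : w ∈ h.m) : a * w ∈ h.m := by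
  induction hw using Submodule.mul_induction_on' with
  | mem_mul_mem x hx y hy =>
    rw [← mul_assoc]; exact Submodule.mul_mem_mul (h.n_mul_left a hx) hy
  | add x _ y _ hx hy => rw [mul_add]; exact h.m.add_mem hx hy

lemma AbsTrace.m_right (h : AbsTrace τ) (a : A) {w : A} (hw : w ∈ h.m) : w * a ∈ h.m := by
  induction hw using Submodule.mul_induction_on' with
  | mem_mul_mem x hx y hy =>
    rw [mul_assoc]; exact Submodule.mul_mem_mul hx (h.n_mul_right a hy)
  | add x _ y _ hx hy => rw [add_mul]; exact h.m.add_mem hx hy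

lemma AbsTrace.m_star (h : AbsTrace τ) {w : A} (hw : w ∈ h.m) : star w ∈ h.m := by
  induction hw using Submodule.mul_induction_on' with
  | mem_mul_mem x hx y hy =>
    rw [star_mul]; exact Submodule.mul_mem_mul (h.n_star hy) (h.n_star hx)
  | add x _ y _ hx hy => rw [star_add]; exact h.m.add_mem hx hy

/-- A linear functional extending the trace. -/
def AbsTrace.Ext (h : AbsTrace τ) (φ : A →ₗ[ℂ] ℂ) : Prop :=
  ∀ x ∈ h.n, φ (star x * x) = ((τ (star x * x)).toReal : ℂ)

variable {φ : A →ₗ[ℂ] ℂ}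

lemma AbsTrace.phi_swap (h : AbsTrace τ) (hφ : h.Ext φ) {x : A} (hx : x ∈ h.n) :
    φ (x * star x) = φ (star x * x) := by
  have := hφ (star x) (h.n_star hx)
  rw [star_star, h.tracial] at this
  rw [this, hφ x hx]

lemma AbsTrace.phi_n_comm' (h : AbsTrace τ) (hφ : h.Ext φ) {x y : A} (hx : x ∈ h.n) (hy : y ∈ h.n) :
    φ (star y * x) = φ (x * star y) := by
  have hI := h.n.smul_mem Complex.I hy
  have e : φ ((4 : ℂ) • (star y * x)) = φ ((4 : ℂ) • (x * star y)) := by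
    rw [polar_left, polar_right]
    simp only [map_add, map_sub, map_smul]
    rw [h.phi_swap hφ (h.n.add_mem hx hy), h.phi_swap hφ (h.n.sub_mem hx hy),
      h.phi_swap hφ (h.n.add_mem hx hI), h.phi_swap hφ (h.n.sub_mem hx hI)]
  rw [map_smul, map_smul] at e
  exact mul_left_cancel₀ (by norm_num : (4 : ℂ) ≠ 0) (by simpa only [smul_eq_mul] using e)

lemma AbsTrace.phi_n_comm (h : AbsTrace τ) (hφ : h.Ext φ) {x y : A} (hx : x ∈ h.n) (hy : y ∈ h.n) :
    φ (y * x) = φ (x * y) := by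
  have := h.phi_n_comm' hφ hx (h.n_star hy)
  simpa using this

lemma AbsTrace.phi_comm (h : AbsTrace τ) (hφ : h.Ext φ) (a : A) {w : A} (hw : w ∈ h.m) :
    φ (w * a) = φ (a * w) := by
  induction hw using Submodule.mul_induction_on' with
  | mem_mul_mem x hx y hy =>
    rw [mul_assoc, h.phi_n_comm hφ (h.n_mul_right a hy) hx, mul_assoc,
      h.phi_n_comm hφ (h.n_mul_left a hx) hy, mul_assoc]
  | add x _ y _ hx hy => rw [mul_add, add_mul, map_add, map_add, hx, hy]

lemma AbsTrace.phi_bound (h : AbsTrace τ) (hφ : h.Ext φ) {x y : A} (hx : x ∈ h.n) (hy : y ∈ h.n) :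
    ‖φ (star y * x)‖ ≤ (τ (star x * x)).toReal + (τ (star y * y)).toReal := by
  have hI := h.n.smul_mem Complex.I hy
  have nn : ∀ v ∈ h.n, ‖φ (star v * v)‖ = (τ (star v * v)).toReal := by
    intro v hv
    rw [hφ v hv, Complex.norm_real, Real.norm_of_nonneg ENNReal.toReal_nonneg]
  have par : ∀ y ∈ h.n, ‖φ (star (x + y) * (x + y))‖ + ‖φ (star (x - y) * (x - y))‖
      = 2 * (τ (star x * x)).toReal + 2 * (τ (star y * y)).toReal := by
    intro y hy
    have e : star (x + y) * (x + y) + star (x - y) * (x - y)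
        = (star x * x + star x * x) + (star y * y + star y * y) := by
      rw [star_add, star_sub]; noncomm_ring
    have e2 := congrArg φ e
    simp only [map_add] at e2
    rw [hφ x hx, hφ y hy, hφ _ (h.n.add_mem hx hy), hφ _ (h.n.sub_mem hx hy)] at e2
    rw [nn _ (h.n.add_mem hx hy), nn _ (h.n.sub_mem hx hy)]
    have e3 : (τ (star (x + y) * (x + y))).toReal + (τ (star (x - y) * (x - y))).toReal
        = ((τ (star x * x)).toReal + (τ (star x * x)).toReal)
          + ((τ (star y * y)).toReal + (τ (star y * y)).toReal) := by
      exact_mod_cast e2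
    linarith
  have qI : (τ (star (Complex.I • y) * (Complex.I • y))) = τ (star y * y) := by
    rw [h.q_smul]; simp
  have p1 := par y hy
  have p2 := par _ hI
  rw [qI] at p2
  have e := congrArg φ (polar_left x y)
  simp only [map_add, map_sub, map_smul, smul_eq_mul] at e
  have e4 := congrArg norm e
  rw [norm_mul] at e4
  have n4 : ‖(4 : ℂ)‖ = 4 := by simp
  rw [n4] at e4
  have t1 : ∀ p q r s : ℂ, ‖p - q + Complex.I * r - Complex.I * s‖ ≤ ‖p‖ + ‖q‖ + (‖r‖ + ‖s‖) := by
    intro p q r s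
    have a1 := norm_sub_le (p - q + Complex.I * r) (Complex.I * s)
    have a2 := norm_add_le (p - q) (Complex.I * r)
    have a3 := norm_sub_le p q
    rw [norm_mul, Complex.norm_I, one_mul] at a1 a2
    linarith
  have t2 := t1 (φ (star (x + y) * (x + y))) (φ (star (x - y) * (x - y)))
    (φ (star (x + Complex.I • y) * (x + Complex.I • y)))
    (φ (star (x - Complex.I • y) * (x - Complex.I • y)))
  rw [← e4] at t2
  linarith

lemma AbsTrace.phi_bdd (h : AbsTrace τ) (hφ : h.Ext φ) (K : ℝ) {w : A} (hw : w ∈ h.m) :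
    ∃ C : ℝ, ∀ x : A, ‖x‖ ≤ K → ‖φ (w * x)‖ ≤ C := by
  induction hw using Submodule.mul_induction_on' with
  | mem_mul_mem a ha b hb =>
    refine ⟨K ^ 2 * (τ (star (star b) * star b)).toReal + (τ (star (star a) * star a)).toReal,
      fun x hx => ?_⟩
    have h1 := h.phi_bound hφ (h.n_mul_right x hb) (h.n_star ha)
    rw [star_star a] at h1
    rw [mul_assoc]
    refine h1.trans ?_
    rw [star_star a]
    gcongr
    have h2 := h.q_mul (star x) (star b)
    rw [← star_mul, star_star, h.tracial] at h2
    have h3 := ENNReal.toReal_mono (ENNReal.mul_lt_top ENNReal.coe_lt_top (h.n_star hb)).ne h2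
    refine h3.trans ?_
    rw [ENNReal.toReal_mul]
    gcongr
    simp only [ENNReal.coe_toReal, NNReal.coe_pow, coe_nnnorm, norm_star]
    gcongr
  | add a _ b _ ha hb =>
    obtain ⟨C1, h1⟩ := ha
    obtain ⟨C2, h2⟩ := hb
    refine ⟨C1 + C2, fun x hx => ?_⟩
    rw [add_mul, map_add]
    exact (norm_add_le _ _).trans (add_le_add (h1 x hx) (h2 x hx))

variable {D : A →ₗ[ℂ] A}

lemma AbsTrace.phi_unitary (h : AbsTrace τ) (hφ : h.Ext φ)
    (hD : ∀ x y, D (x * y) = D x * y + x * D y)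
    {w u : A} (hw : w ∈ h.m) (hu : u ∈ unitary A) (hc : Commute w u) :
    φ (w * (star u * D u)) = 0 := by
  obtain ⟨C, hC⟩ := der_bounded D hD
  have huv : star u * u = 1 := (Unitary.mem_iff.mp hu).1
  have hvu : u * star u = 1 := (Unitary.mem_iff.mp hu).2
  have hpow : ∀ n, star u ^ n * u ^ n = 1 := fun n => by
    have : Commute (star u) u := by rw [Commute, SemiconjBy, huv, hvu]
    rw [← this.mul_pow, huv, one_pow]
  have hF : ∀ n : ℕ, φ (w * (star u ^ n * D (u ^ n))) = n * φ (w * (star u * D u)) := by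
    intro n
    induction n with
    | zero => simp [der_one D hD]
    | succ n ih =>
      have e : w * (star u ^ (n + 1) * D (u ^ (n + 1)))
          = (w * (star u ^ (n + 1) * D (u ^ n))) * u + w * (star u * D u) := by
        rw [pow_succ u n, hD]
        have : star u ^ (n + 1) * (D (u ^ n) * u + u ^ n * D u)
          = (star u ^ (n + 1) * D (u ^ n)) * u + star u * (star u ^ n * u ^ n) * D u := by
          rw [pow_succ' (star u)]; noncomm_ring
        rw [this, hpow, mul_one, mul_add, ← mul_assoc]
      have e2 : u * (w * (star u ^ (n + 1) * D (u ^ n))) = w * (star u ^ n * D (u ^ n)) := by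
        calc _ = (u * w) * star u ^ (n + 1) * D (u ^ n) := by noncomm_ring
          _ = w * (u * star u) * star u ^ n * D (u ^ n) := by
            rw [← hc.eq, pow_succ']; noncomm_ring
          _ = _ := by rw [hvu, mul_one, mul_assoc]
      rw [e, map_add, h.phi_comm hφ u (h.m_right _ hw), e2, ih]
      push_cast; ring
  have hn1 : ∀ n, ‖u ^ n‖ ≤ 1 := by
    intro n
    rcases subsingleton_or_nontrivial A with hs | hs
    · rw [Subsingleton.elim (u ^ n) 0]; simp
    · exact (CStarRing.norm_of_mem_unitary (pow_mem hu n)).le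
  obtain ⟨B, hB⟩ := h.phi_bdd hφ |C| hw
  have hb : ∀ n : ℕ, (n : ℝ) * ‖φ (w * (star u * D u))‖ ≤ B := by
    intro n
    have h1 := hB (star u ^ n * D (u ^ n)) (by
      calc _ ≤ ‖star u ^ n‖ * ‖D (u ^ n)‖ := norm_mul_le _ _
        _ ≤ 1 * (|C| * 1) := by
          gcongr
          · rw [← star_pow, norm_star]; exact hn1 n
          · refine (hC _).trans ?_
            have := le_abs_self C
            have := hn1 n
            gcongr
        _ = _ := by ring)
    rw [hF, norm_mul] at h1
    simpa using h1
  by_contra hne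
  have hpos : 0 < ‖φ (w * (star u * D u))‖ := norm_pos_iff.mpr hne
  obtain ⟨n, hn⟩ := exists_nat_gt (B / ‖φ (w * (star u * D u))‖)
  rw [div_lt_iff₀ hpos] at hn
  exact absurd (hb n) (not_le.mpr hn)

lemma AbsTrace.phi_sa (h : AbsTrace τ) (hφ : h.Ext φ)
    (hD : ∀ x y, D (x * y) = D x * y + x * D y)
    {z : A} (hz : z ∈ h.m) (hsa : IsSelfAdjoint z) : φ (z * D z) = 0 := by
  -- the case of a contraction
  have small : ∀ z ∈ h.m, IsSelfAdjoint z → ‖z‖ ≤ 1 → φ (z * D z) = 0 := by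
    intro z hz hsa hn
    have hu := hsa.self_add_I_smul_cfcSqrt_sub_sq_mem_unitary z hn
    set s := CFC.sqrt (1 - z ^ 2 : A) with hs
    have hssa : IsSelfAdjoint s := (CFC.sqrt_nonneg (1 - z ^ 2 : A)).isSelfAdjoint
    set u := z + Complex.I • s with hudef
    have hvdef : star u = z - Complex.I • s := by
      rw [hudef, star_add, star_smul, hsa.star_eq, hssa.star_eq, Complex.star_def, Complex.conj_I,
        neg_smul, sub_eq_add_neg]
    have huv : star u * u = 1 := (Unitary.mem_iff.mp hu).1
    have hvu : u * star u = 1 := (Unitary.mem_iff.mp hu).2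
    have hsum : u + star u = (2 : ℂ) • z := by
      rw [hvdef, hudef, two_smul]; abel
    have hcuv : Commute u (star u) := by rw [Commute, SemiconjBy, huv, hvu]
    have hzu : Commute z u := by
      have h1 : Commute (u + star u) u := (Commute.refl u).add_left hcuv.symm
      rw [hsum] at h1
      have h2 := h1.smul_left (2⁻¹ : ℂ)
      rwa [smul_smul, inv_mul_cancel₀ two_ne_zero, one_smul] at h2
    have hDv : D (star u) = - (star u * D u * star u) := by
      have h1 : D (star u * u) = 0 := by rw [huv, der_one D hD]
      rw [hD] at h1
      have h2 : D (star u) * u = - (star u * D u) := eq_neg_of_add_eq_zero_left h1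
      calc D (star u) = D (star u) * (u * star u) := by rw [hvu, mul_one]
        _ = (D (star u) * u) * star u := by noncomm_ring
        _ = _ := by rw [h2]; noncomm_ring
    have f1 : φ (z * D u) = 0 := by
      have := h.phi_unitary hφ hD (h.m_right u hz) hu (hzu.mul_left (Commute.refl u))
      rw [show z * u * (star u * D u) = z * (u * star u) * D u by noncomm_ring, hvu, mul_one] at this
      exact this
    have hzv : Commute (star u) z := by
      have := hzu.star_star
      rw [hsa.star_eq] at this
      exact this.symm
    have f2 : φ (z * D (star u)) = 0 := by
      have := h.phi_unitary hφ hD (h.m_right (star u) hz) hu (hzu.mul_left hcuv.symm)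
      rw [hDv, mul_neg, map_neg, neg_eq_zero]
      rw [show z * (star u * D u * star u) = (z * (star u * D u)) * star u by noncomm_ring,
        h.phi_comm hφ _ (h.m_right _ hz), ← mul_assoc, hzv.eq]
      exact this
    have h3 : φ (z * D (u + star u)) = 0 := by rw [map_add, mul_add, map_add, f1, f2, add_zero]
    rw [hsum, map_smul, mul_smul_comm, map_smul] at h3
    exact (smul_eq_zero.mp h3).resolve_left two_ne_zero
  set r : ℝ := ‖z‖ + 1 with hr
  have hr0 : 0 < r := by positivity
  have h1 := small (((r⁻¹ : ℝ) : ℂ) • z) (h.m.smul_mem _ hz)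
    (by rw [Complex.coe_smul]; exact (IsSelfAdjoint.all _).smul hsa) (by
      rw [norm_smul, Complex.norm_real, norm_inv, Real.norm_of_nonneg hr0.le,
        inv_mul_le_one₀ hr0]
      linarith)
  rw [map_smul, smul_mul_assoc, mul_smul_comm, map_smul, map_smul] at h1
  have hne : (((r⁻¹ : ℝ)) : ℂ) ≠ 0 := by
    exact_mod_cast inv_ne_zero hr0.ne'
  exact (smul_eq_zero.mp ((smul_eq_zero.mp h1).resolve_left hne)).resolve_left hne

lemma AbsTrace.m_re (h : AbsTrace τ) {z : A} (hz : z ∈ h.m) : (ℜ z : A) ∈ h.m := by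
  rw [realPart_apply_coe, ← Complex.coe_smul]
  exact h.m.smul_mem _ (h.m.add_mem hz (h.m_star hz))

lemma AbsTrace.m_im (h : AbsTrace τ) {z : A} (hz : z ∈ h.m) : (ℑ z : A) ∈ h.m := by
  rw [imaginaryPart_apply_coe, ← Complex.coe_smul]
  exact h.m.smul_mem _ (h.m.smul_mem _ (h.m.sub_mem hz (h.m_star hz)))

lemma AbsTrace.phi_prod (h : AbsTrace τ) (hφ : h.Ext φ)
    (hD : ∀ x y, D (x * y) = D x * y + x * D y)
    {z w : A} (hz : z ∈ h.m) (hw : w ∈ h.m) : φ (D (z * w)) = 0 := by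
  have sa : ∀ z w : A, z ∈ h.m → w ∈ h.m → IsSelfAdjoint z → IsSelfAdjoint w →
      φ (D (z * w)) = 0 := by
    intro z w hz hw hzs hws
    have h1 := h.phi_sa hφ hD (h.m.add_mem hz hw) (hzs.add hws)
    rw [map_add, add_mul, mul_add, mul_add, map_add, map_add, map_add, h.phi_sa hφ hD hz hzs,
      h.phi_sa hφ hD hw hws, zero_add, add_zero] at h1
    rw [hD, map_add, ← h.phi_comm hφ (D z) hw, add_comm]
    exact h1
  have e : z * w = (ℜ z : A) * ℜ w + Complex.I • ((ℜ z : A) * ℑ w) + Complex.I • ((ℑ z : A) * ℜ w)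
      - (ℑ z : A) * ℑ w := by
    conv_lhs => rw [← realPart_add_I_smul_imaginaryPart z, ← realPart_add_I_smul_imaginaryPart w]
    simp only [add_mul, mul_add, smul_mul_assoc, mul_smul_comm, smul_add, smul_smul,
      Complex.I_mul_I, neg_smul, one_smul]
    abel
  rw [e]
  simp only [map_add, map_sub, map_smul]
  rw [sa _ _ (h.m_re hz) (h.m_re hw) (ℜ z).2 (ℜ w).2, sa _ _ (h.m_re hz) (h.m_im hw) (ℜ z).2 (ℑ w).2,
    sa _ _ (h.m_im hz) (h.m_re hw) (ℑ z).2 (ℜ w).2, sa _ _ (h.m_im hz) (h.m_im hw) (ℑ z).2 (ℑ w).2]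
  simp

lemma AbsTrace.sep (h : AbsTrace τ) (hφ : h.Ext φ) (a : A)
    (ha : ∀ z ∈ h.m, ∀ w ∈ h.m, φ (a * (z * w)) = 0) : a = 0 := by
  by_contra hne
  have hne2 : star a * a ≠ 0 := fun h0 => hne (CStarRing.star_mul_self_eq_zero_iff a |>.mp h0)
  obtain ⟨y, hy0, hyne, hyle, hyfin⟩ := h.semifinite _ (star_mul_self_nonneg a) hne2
  have hysa : IsSelfAdjoint y := hy0.isSelfAdjoint
  set s := CFC.sqrt y with hs
  have hssa : IsSelfAdjoint s := (CFC.sqrt_nonneg y).isSelfAdjoint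
  have hss : s * s = y := CFC.sqrt_mul_sqrt_self y hy0
  have hsn : s ∈ h.n := by rw [h.mem_n, hssa.star_eq, hss]; exact hyfin
  have hym : y ∈ h.m := by rw [← hss]; exact Submodule.mul_mem_mul hsn hsn
  have hyn : y ∈ h.n := by rw [← hss]; exact h.n_mul_left _ hsn
  have h1 := ha y hym (y * star a) (h.m_right _ hym)
  have hxn : y * star a ∈ h.n := h.n_mul_right _ hyn
  have e : a * (y * (y * star a)) = star (y * star a) * (y * star a) := by
    rw [star_mul, star_star, hysa.star_eq, mul_assoc]
  rw [e, hφ _ hxn] at h1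
  have h2 : τ (star (y * star a) * (y * star a)) = 0 := by
    have h3 : (τ (star (y * star a) * (y * star a))).toReal = 0 := by exact_mod_cast h1
    rcases (ENNReal.toReal_eq_zero_iff _).mp h3 with h4 | h4
    · exact h4
    · exact absurd h4 hxn.ne
  have h3 := h.faithful _ (star_mul_self_nonneg _) h2
  have h4 : y * star a = 0 := (CStarRing.star_mul_self_eq_zero_iff _).mp h3
  have h5 : y * y * y ≤ 0 := by
    have := star_left_conjugate_le_conjugate hyle y
    rw [hysa.star_eq, ← mul_assoc y (star a) a, h4, zero_mul, zero_mul] at this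
    exact this
  have h6 : 0 ≤ y * y * y := by
    have := star_left_conjugate_le_conjugate hy0 y
    rw [hysa.star_eq, mul_zero, zero_mul] at this
    exact this
  have h7 : y * y * y = 0 := le_antisymm h5 h6
  have h8 : y * y = 0 := by
    apply (CStarRing.star_mul_self_eq_zero_iff _).mp
    rw [star_mul, hysa.star_eq, ← mul_assoc, h7, zero_mul]
  apply hyne
  apply (CStarRing.star_mul_self_eq_zero_iff _).mp
  rw [hysa.star_eq, h8]

theorem abstract_main (h : AbsTrace τ) (Δ : A → A)
    (hΔ : ∀ x y : A, ∃ D : A →ₗ[ℂ] A, (∀ x y, D (x * y) = D x * y + x * D y) ∧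
      Δ x = D x ∧ Δ y = D y) :
    (∀ x y, Δ (x + y) = Δ x + Δ y) ∧ (∀ (c : ℂ) x, Δ (c • x) = c • Δ x) ∧
    (∀ x y, Δ (x * y) = Δ x * y + x * Δ y) := by
  obtain ⟨φ, hφ'⟩ := h.exists_phi
  have hφ : h.Ext φ := hφ'
  have key : ∀ x, ∀ z ∈ h.m, ∀ w ∈ h.m, φ (Δ x * (z * w)) = - φ (x * Δ (z * w)) := by
    intro x z hz w hw
    obtain ⟨D, hD, h1, h2⟩ := hΔ x (z * w)
    have h3 := h.phi_prod hφ hD (h.m_left x hz) hw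
    rw [mul_assoc, hD, map_add] at h3
    rw [h1, h2]
    exact eq_neg_of_add_eq_zero_left h3
  have hadd : ∀ x y, Δ (x + y) = Δ x + Δ y := by
    intro x y
    rw [← sub_eq_zero]
    apply h.sep hφ
    intro z hz w hw
    rw [sub_mul, add_mul, map_sub, map_add, key _ z hz w hw, key _ z hz w hw, key _ z hz w hw,
      add_mul, map_add]
    ring
  have hsmul : ∀ (c : ℂ) x, Δ (c • x) = c • Δ x := by
    intro c x
    obtain ⟨D, hD, h1, h2⟩ := hΔ x (c • x)
    rw [h1, h2, map_smul]
  refine ⟨hadd, hsmul, ?_⟩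
  apply jordan_isDer Δ hadd
  · intro x
    obtain ⟨D, hD, h1, h2⟩ := hΔ x (x * x)
    rw [h1, h2, hD]
  · intro x hx
    rw [← two_smul ℂ] at hx
    exact (smul_eq_zero.mp hx).resolve_left two_ne_zero
  · intro p hp
    have h1 := hp (star p)
    apply (CStarRing.star_mul_self_eq_zero_iff p).mp
    apply (CStarRing.star_mul_self_eq_zero_iff _).mp
    rw [star_mul, star_star, mul_assoc, ← mul_assoc p, h1, mul_zero]

end FinalPart

section Transfer

lemma vn_isClosed (M : VonNeumannAlgebra H) : IsClosed (M : Set (H →L[ℂ] H)) := by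
  have h := M.centralizer_centralizer'
  have : (M : Set (H →L[ℂ] H)) = Set.centralizer (Set.centralizer (M : Set (H →L[ℂ] H))) := h.symm
  rw [this]
  exact Set.isClosed_centralizer _

noncomputable instance vnCStar (M : VonNeumannAlgebra H) : CStarAlgebra M :=
  haveI : IsClosed (M : Set (H →L[ℂ] H)) := vn_isClosed M
  StarSubalgebra.cstarAlgebra M

noncomputable instance vnOrder (M : VonNeumannAlgebra H) : PartialOrder M :=
  CStarAlgebra.spectralOrder M

noncomputable instance vnPreorder (M : VonNeumannAlgebra H) : Preorder M :=
  (vnOrder M).toPreorder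

noncomputable instance vnLE (M : VonNeumannAlgebra H) : LE M :=
  (vnOrder M).toLE

instance vnStarOrdered (M : VonNeumannAlgebra H) : StarOrderedRing M :=
  CStarAlgebra.spectralOrderedRing M

lemma isPos_of_nonneg (M : VonNeumannAlgebra H) {x : M} (hx : 0 ≤ x) : IsPos M x := by
  obtain ⟨c, rfl⟩ := CStarAlgebra.nonneg_iff_eq_star_mul_self.mp hx
  have : (0 : H →L[ℂ] H) ≤ star (c : H →L[ℂ] H) * (c : H →L[ℂ] H) := star_mul_self_nonneg _
  exact (ContinuousLinearMap.nonneg_iff_isPositive _).mp this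

lemma nonneg_of_isPos (M : VonNeumannAlgebra H) {x : M} (hx : IsPos M x) : 0 ≤ x := by
  have hsa : IsSelfAdjoint x := Subtype.ext hx.isSelfAdjoint.star_eq
  have hn : 0 ≤ x⁻ := CFC.negPart_nonneg x
  have hnsa : IsSelfAdjoint x⁻ := hn.isSelfAdjoint
  have h1 : star x⁻ * x * x⁻ = - (x⁻ * x⁻ * x⁻) := by
    rw [hnsa.star_eq]
    have : x⁻ * x = - (x⁻ * x⁻) := by
      nth_rewrite 2 [← CFC.posPart_sub_negPart x hsa]
      rw [mul_sub, CFC.negPart_mul_posPart, zero_sub]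
    rw [this, neg_mul]
  have h2 : 0 ≤ x⁻ * x⁻ * x⁻ := by
    have := star_left_conjugate_nonneg hn x⁻
    rwa [hnsa.star_eq] at this
  have h3 : (0 : H →L[ℂ] H) ≤ ((x⁻ * x⁻ * x⁻ : M) : H →L[ℂ] H) :=
    (ContinuousLinearMap.nonneg_iff_isPositive _).mpr (isPos_of_nonneg M h2)
  have h4 : (0 : H →L[ℂ] H) ≤ - ((x⁻ * x⁻ * x⁻ : M) : H →L[ℂ] H) := by
    have h5 : (0 : H →L[ℂ] H) ≤ (x : H →L[ℂ] H) :=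
      (ContinuousLinearMap.nonneg_iff_isPositive _).mpr hx
    have h6 := star_left_conjugate_nonneg h5 ((x⁻ : M) : H →L[ℂ] H)
    have h7 := congrArg (Subtype.val : M → (H →L[ℂ] H)) h1
    exact h6.trans_eq h7
  have h5 : x⁻ * x⁻ * x⁻ = 0 := Subtype.ext (le_antisymm (neg_nonneg.mp h4) h3)
  have h8 : x⁻ * x⁻ = 0 := by
    apply (CStarRing.star_mul_self_eq_zero_iff _).mp
    rw [star_mul, hnsa.star_eq, ← mul_assoc, h5, zero_mul]
  have h9 : x⁻ = 0 := by
    apply (CStarRing.star_mul_self_eq_zero_iff _).mp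
    rw [hnsa.star_eq, h8]
  rw [← CFC.posPart_sub_negPart x hsa, h9, sub_zero]
  exact CFC.posPart_nonneg x

lemma absTrace_of_fns (M : VonNeumannAlgebra H) (T : FNSTrace M) : AbsTrace T.τ where
  add x y hx hy := T.additive x y (isPos_of_nonneg M hx) (isPos_of_nonneg M hy)
  smul c x hx := T.pos_smul c x (isPos_of_nonneg M hx)
  tracial x := T.tracial x
  faithful x hx h0 := T.faithful x (isPos_of_nonneg M hx) h0
  semifinite x hx hne := by
    obtain ⟨y, h1, h2, h3, h4⟩ := T.semifinite x (isPos_of_nonneg M hx) hne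
    refine ⟨y, nonneg_of_isPos M h1, h2, ?_, h4⟩
    have h5 : IsPos M (x - y) := h3
    exact sub_nonneg.mp (nonneg_of_isPos M h5)

end Transfer

/-- Every 2-local derivation on a semi-finite von Neumann algebra (one admitting a faithful
normal semifinite trace) is a derivation. -/
theorem twoLocalDerivation_isDerivation_of_semifinite
    (M : VonNeumannAlgebra H) (hM : Nonempty (FNSTrace M))
    (Δ : M → M) (hΔ : Is2LocalDerivation M Δ) :
    IsDerivation M Δ := by
  obtain ⟨T⟩ := hM
  refine abstract_main (absTrace_of_fns M T) Δ fun x y => ?_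
  obtain ⟨D, ⟨ha, hs, hm⟩, h1, h2⟩ := hΔ x y
  exact ⟨{ toFun := D, map_add' := ha, map_smul' := hs }, hm, h1, h2⟩
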